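/- arXiv:math/0608649 — 3 statements merged into one kernel-verified Lean document; each statement's English description precedes it below -/
import Mathlib

section
/- Let p be an odd prime, let q ∈ ℚ_p satisfy |q - 1|_p < 1 with q ≠ 1, and let n be a nonnegative integer. Then the p-adic q-Riemann sums (1/[p^N]_{-q}) · Σ_{x=0}^{p^N - 1} [x]_q^n (-q)^x converge as N → ∞, and their limit E_{n,q} equals (1+q) · (1/(1-q))^n · Σ_{l=0}^n C(n,l) (-1)^l / (1 + q^{l+1}). (Here 1 + q^{l+1} ≠ 0 since |q^{l+1} - 1|_p < 1 and p is odd.) -/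
open Filter

/-!
Expanding `(1 - q ^ x) ^ n` binomially turns the Riemann sum of odd length `M` into a combination
of geometric sums with ratios `-q ^ (l + 1)`. In terms of `r = q ^ M` it becomes the closed form
of the limit, with the `l`-th summand weighted by `(1 + r ^ (l + 1)) / (1 + r)`. All these weights
tend to `1` as `r → 1`. Over an ultrametric field, `r → 1` along `M = m ^ N` with `‖m‖ < 1`: since
`1 + q + ⋯ + q ^ (m - 1) ≡ m` modulo `q - 1`, raising to the power `m` multiplies the distance
to `1` by at most `max ‖m‖ ‖q - 1‖ < 1`.
-/

lemma one_add_ne_zero_of_norm_sub_one_lt {R : Type*} [SeminormedRing R] {q : R}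
    (h2 : ‖(2 : R)‖ = 1) (hq : ‖q - 1‖ < 1) : 1 + q ≠ 0 := by
  intro hzero
  have hneg : q - 1 = -2 := by
    rw [eq_neg_of_add_eq_zero_right hzero]
    norm_num
  rw [hneg, norm_neg, h2] at hq
  exact hq.false

section UltrametricRing

variable {R : Type*} [SeminormedRing R] [NormOneClass R] [IsUltrametricDist R] {q : R}

lemma norm_le_one_of_norm_sub_one_le_one (hq : ‖q - 1‖ ≤ 1) : ‖q‖ ≤ 1 := by
  simpa [hq] using IsUltrametricDist.norm_add_one_le_max_norm_one (q - 1)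

lemma norm_pow_sub_one_le (hq : ‖q - 1‖ ≤ 1) (k : ℕ) : ‖q ^ k - 1‖ ≤ ‖q - 1‖ := by
  have hgeom : ‖∑ i ∈ Finset.range k, q ^ i‖ ≤ 1 :=
    IsUltrametricDist.norm_sum_le_of_forall_le_of_nonneg zero_le_one fun i _ ↦
      (norm_pow_le q i).trans
        (pow_le_one₀ (norm_nonneg q) (norm_le_one_of_norm_sub_one_le_one hq))
  rw [← mul_geom_sum]
  exact (norm_mul_le _ _).trans (mul_le_of_le_one_right (norm_nonneg _) hgeom)

lemma norm_geom_sum_le_max (hq : ‖q - 1‖ ≤ 1) (m : ℕ) :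
    ‖∑ i ∈ Finset.range m, q ^ i‖ ≤ max ‖(m : R)‖ ‖q - 1‖ := by
  have hdecomp : ∑ i ∈ Finset.range m, q ^ i = m + ∑ i ∈ Finset.range m, (q ^ i - 1) := by
    simp [Finset.sum_sub_distrib]
  rw [hdecomp]
  refine (IsUltrametricDist.norm_add_le_max _ _).trans (max_le_max le_rfl ?_)
  exact IsUltrametricDist.norm_sum_le_of_forall_le_of_nonneg (norm_nonneg _) fun i _ ↦
    norm_pow_sub_one_le hq i

lemma norm_pow_sub_one_le_mul_max (hq : ‖q - 1‖ ≤ 1) (m : ℕ) :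
    ‖q ^ m - 1‖ ≤ ‖q - 1‖ * max ‖(m : R)‖ ‖q - 1‖ := by
  rw [← mul_geom_sum]
  exact (norm_mul_le _ _).trans (by gcongr; exact norm_geom_sum_le_max hq m)

lemma norm_pow_pow_sub_one_le (hq : ‖q - 1‖ ≤ 1) (m N : ℕ) :
    ‖q ^ m ^ N - 1‖ ≤ ‖q - 1‖ * max ‖(m : R)‖ ‖q - 1‖ ^ N := by
  induction N with
  | zero => simp
  | succ N ih =>
    have hN : ‖q ^ m ^ N - 1‖ ≤ ‖q - 1‖ := norm_pow_sub_one_le hq _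
    calc
      ‖q ^ m ^ (N + 1) - 1‖ = ‖(q ^ m ^ N) ^ m - 1‖ := by rw [pow_succ, pow_mul]
      _ ≤ ‖q ^ m ^ N - 1‖ * max ‖(m : R)‖ ‖q ^ m ^ N - 1‖ :=
        norm_pow_sub_one_le_mul_max (hN.trans hq) m
      _ ≤ ‖q - 1‖ * max ‖(m : R)‖ ‖q - 1‖ ^ N * max ‖(m : R)‖ ‖q - 1‖ := by gcongr
      _ = ‖q - 1‖ * max ‖(m : R)‖ ‖q - 1‖ ^ (N + 1) := by rw [mul_assoc, pow_succ]

lemma tendsto_pow_pow_nhds_one {m : ℕ} (hm : ‖(m : R)‖ < 1) (hq : ‖q - 1‖ < 1) :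
    Tendsto (fun N : ℕ ↦ q ^ m ^ N) atTop (nhds 1) := by
  have hbound : Tendsto (fun N : ℕ ↦ ‖q - 1‖ * max ‖(m : R)‖ ‖q - 1‖ ^ N) atTop (nhds 0) := by
    simpa using (tendsto_pow_atTop_nhds_zero_of_lt_one
      (le_max_of_le_left (norm_nonneg _)) (max_lt hm hq)).const_mul ‖q - 1‖
  rw [tendsto_iff_norm_sub_tendsto_zero]
  exact squeeze_zero (fun _ ↦ norm_nonneg _) (norm_pow_pow_sub_one_le hq.le m) hbound

variable (R) in
lemma norm_two_eq_one_of_odd {m : ℕ} (hodd : Odd m) (hm : ‖(m : R)‖ < 1) : ‖(2 : R)‖ = 1 := by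
  refine le_antisymm (mod_cast IsUltrametricDist.norm_natCast_le_one R 2) ?_
  obtain ⟨k, rfl⟩ := hodd
  have hmul : ‖(2 * k : R)‖ ≤ ‖(2 : R)‖ :=
    (norm_mul_le _ _).trans
      (mul_le_of_le_one_right (norm_nonneg _) (IsUltrametricDist.norm_natCast_le_one R k))
  have hmax : 1 ≤ max ‖((2 * k + 1 : ℕ) : R)‖ ‖(2 * k : R)‖ := by
    simpa using IsUltrametricDist.norm_add_le_max ((2 * k + 1 : ℕ) : R) (-(2 * k))
  exact ((le_max_iff.mp hmax).resolve_left hm.not_ge).trans hmul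

end UltrametricRing

lemma geom_sum_neg_of_odd {D : Type*} [DivisionRing D] {a : D} (ha : 1 + a ≠ 0)
    {M : ℕ} (hM : Odd M) :
    ∑ x ∈ Finset.range M, (-a) ^ x = (1 + a ^ M) / (1 + a) := by
  rw [eq_div_iff ha]
  simpa [hM.neg_pow] using geom_sum_mul_neg (-a) M

lemma one_sub_pow_mul_neg_pow {R : Type*} [CommRing R] (q : R) (n x : ℕ) :
    (1 - q ^ x) ^ n * (-q) ^ x =
      ∑ l ∈ Finset.range (n + 1), (n.choose l : R) * (-1) ^ l * (-q ^ (l + 1)) ^ x := by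
  rw [sub_eq_neg_add, add_pow, Finset.sum_mul]
  refine Finset.sum_congr rfl fun l _ ↦ ?_
  rw [neg_pow (q ^ x), neg_pow q, neg_pow (q ^ (l + 1))]
  ring

section Field

variable {K : Type*} [Field K]

/-- The `q`-Riemann sum `(1 / [M]_{-q}) ∑_{x < M} [x]_q ^ n (-q) ^ x` of length `M` of the `n`-th
power of the `q`-number. Both `q`-brackets are written out as quotients, so they take junk values
at `q = 1` and `q = -1`. -/
def qRiemannSum (q : K) (n M : ℕ) : K :=
  (1 / ((1 - (-q) ^ M) / (1 + q))) *
    ∑ x ∈ Finset.range M, ((1 - q ^ x) / (1 - q)) ^ n * (-q) ^ x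

/-- The `n`-th `q`-Euler number `E_{n,q}`, by its closed form as a finite sum. -/
def qEulerNumber (q : K) (n : ℕ) : K :=
  (1 + q) * (1 / (1 - q)) ^ n *
    ∑ l ∈ Finset.range (n + 1), (n.choose l : K) * (-1) ^ l / (1 + q ^ (l + 1))

lemma sum_one_sub_pow_mul_neg_pow {q : K} (hq : ∀ k, 1 + q ^ (k + 1) ≠ 0) (n : ℕ) {M : ℕ}
    (hM : Odd M) :
    ∑ x ∈ Finset.range M, (1 - q ^ x) ^ n * (-q) ^ x =
      ∑ l ∈ Finset.range (n + 1),
        (n.choose l : K) * (-1) ^ l / (1 + q ^ (l + 1)) * (1 + (q ^ M) ^ (l + 1)) := by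
  simp only [one_sub_pow_mul_neg_pow]
  rw [Finset.sum_comm]
  refine Finset.sum_congr rfl fun l _ ↦ ?_
  rw [← Finset.mul_sum, geom_sum_neg_of_odd (hq l) hM, pow_right_comm]
  ring

lemma qRiemannSum_of_odd {q : K} (hq : ∀ k, 1 + q ^ (k + 1) ≠ 0) (n : ℕ) {M : ℕ}
    (hM : Odd M) :
    qRiemannSum q n M = (1 + q) * (1 / (1 - q)) ^ n *
      ∑ l ∈ Finset.range (n + 1), (n.choose l : K) * (-1) ^ l / (1 + q ^ (l + 1)) *
        ((1 + (q ^ M) ^ (l + 1)) / (1 + q ^ M)) := by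
  have hfactor : ∑ x ∈ Finset.range M, ((1 - q ^ x) / (1 - q)) ^ n * (-q) ^ x =
      (1 / (1 - q)) ^ n * ∑ x ∈ Finset.range M, (1 - q ^ x) ^ n * (-q) ^ x := by
    rw [Finset.mul_sum]
    exact Finset.sum_congr rfl fun x _ ↦ by rw [div_eq_mul_one_div, mul_pow]; ring
  rw [qRiemannSum, hfactor, sum_one_sub_pow_mul_neg_pow hq n hM, one_div_div, hM.neg_pow,
    sub_neg_eq_add]
  simp only [← mul_div_assoc, ← Finset.sum_div]
  ring

lemma tendsto_qRiemannSum [TopologicalSpace K] [IsTopologicalSemiring K] [ContinuousInv₀ K]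
    {q : K} (hq : ∀ k, 1 + q ^ k ≠ 0) (n : ℕ) {ι : Type*} {L : Filter ι} {M : ι → ℕ}
    (hM : ∀ i, Odd (M i)) (hlim : Tendsto (fun i ↦ q ^ M i) L (nhds 1)) :
    Tendsto (fun i ↦ qRiemannSum q n (M i)) L (nhds (qEulerNumber q n)) := by
  have h2 : (1 + 1 : K) ≠ 0 := by simpa using hq 0
  have hweight (l : ℕ) :
      Tendsto (fun i ↦ (1 + (q ^ M i) ^ (l + 1)) / (1 + q ^ M i)) L (nhds 1) := by
    simpa [h2, Pi.div_def] using ((hlim.pow (l + 1)).const_add 1).div (hlim.const_add 1) h2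
  simp only [fun i ↦ qRiemannSum_of_odd (fun k ↦ hq (k + 1)) n (hM i)]
  refine Tendsto.const_mul _ (tendsto_finsetSum _ fun l _ ↦ ?_)
  simpa only [mul_one] using (hweight l).const_mul _

end Field

theorem stmt_10_general {K : Type*} [NormedField K] [IsUltrametricDist K] {m : ℕ}
    (hodd : Odd m) (hm : ‖(m : K)‖ < 1) {q : K} (hq1 : ‖q - 1‖ < 1) (_hq : q ≠ 1) (n : ℕ) :
    Tendsto (fun N : ℕ ↦ qRiemannSum q n (m ^ N)) atTop (nhds (qEulerNumber q n)) := by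
  have hne (k : ℕ) : 1 + q ^ k ≠ 0 :=
    one_add_ne_zero_of_norm_sub_one_lt (norm_two_eq_one_of_odd K hodd hm)
      ((norm_pow_sub_one_le hq1.le k).trans_lt hq1)
  exact tendsto_qRiemannSum hne n (fun _ ↦ hodd.pow) (tendsto_pow_pow_nhds_one hm hq1)

/-- Let `p` be an odd prime, `q ∈ ℚ_p` with `|q-1|_p < 1`, `q ≠ 1`, `n : ℕ`.
Then the `p`-adic `q`-Riemann sums `(1/[p^N]_{-q}) Σ_{x=0}^{p^N-1} [x]_q^n (-q)^x` converge
as `N → ∞` to `(1+q) · (1/(1-q))^n · Σ_{l=0}^n C(n,l)(-1)^l/(1+q^{l+1})`. -/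
theorem stmt_10 (p : ℕ) [Fact p.Prime] (hodd : Odd p)
    (q : ℚ_[p]) (hq1 : ‖q - 1‖ < 1) (hq : q ≠ 1) (n : ℕ) :
    Tendsto (fun N : ℕ =>
        (1 / ((1 - (-q) ^ (p ^ N)) / (1 + q))) *
          ∑ x ∈ Finset.range (p ^ N), ((1 - q ^ x) / (1 - q)) ^ n * (-q) ^ x)
      atTop
      (nhds ((1 + q) * (1 / (1 - q)) ^ n *
        ∑ l ∈ Finset.range (n + 1), (n.choose l : ℚ_[p]) * (-1) ^ l / (1 + q ^ (l + 1)))) :=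
  stmt_10_general hodd Padic.norm_p_lt_one hq1 hq n
end

section
/- Let p be an odd prime, let q ∈ ℚ_p satisfy |q - 1|_p < 1 with q ≠ 1, let m be a nonnegative integer, and let n be an odd positive integer. Then q^n · lim_{N→∞} (1/[p^N]_{-q}) Σ_{x=0}^{p^N - 1} [x+n]_q^m (-q)^x + lim_{N→∞} (1/[p^N]_{-q}) Σ_{x=0}^{p^N - 1} [x]_q^m (-q)^x = (1+q) · Σ_{l=0}^{n-1} (-1)^l q^l [l]_q^m, both limits existing in ℚ_p. -/
open Filter

/-!
Write `κ x = q ^ x`, a continuous character of `ℤ_p`. Since `1 / [p ^ N]_{-q} → (1 + q) / 2`, the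
`q`-integral of `f` is `(1 + q) / 2` times the limit of the alternating sums
`S_N = ∑_{x < p ^ N} (-1) ^ x g x` with `g = κ f`. As `p` is odd, cutting `S_{N + 1}` into `p`
blocks of length `p ^ N` and comparing each with `S_N` leaves an error bounded by the oscillation
of `g` on residue classes modulo `p ^ N`; hence `S_N` converges for every continuous `g`.
Replacing `g` by `g (· + 1)` negates `S_N` up to the boundary terms `g 0` and `g (p ^ N) → g 0`,
and iterating this `n` times gives the identity.
-/

section AlternatingSums

lemma sum_range_mul_eq_sum_blocks {M : Type*} [AddCommMonoid M] (a : ℕ → M) (m k : ℕ) :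
    ∑ x ∈ Finset.range (m * k), a x =
      ∑ j ∈ Finset.range k, ∑ x ∈ Finset.range m, a (m * j + x) := by
  induction k with
  | zero => simp
  | succ k ih => rw [Nat.mul_succ, Finset.sum_range_add, ih, Finset.sum_range_succ]

lemma alternating_sum_range_mul_sub {R : Type*} [Ring R] {m k : ℕ} (hm : Odd m) (hk : Odd k)
    (a : ℕ → R) :
    ∑ x ∈ Finset.range (m * k), (-1) ^ x * a x - ∑ x ∈ Finset.range m, (-1) ^ x * a x =
      ∑ j ∈ Finset.range k, ∑ x ∈ Finset.range m,
        (-1) ^ (m * j + x) * (a (m * j + x) - a x) := by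
  have blocks_const : ∑ j ∈ Finset.range k, ∑ x ∈ Finset.range m, (-1) ^ (m * j + x) * a x =
      ∑ x ∈ Finset.range m, (-1) ^ x * a x := by
    simp_rw [pow_add, pow_mul, hm.neg_one_pow, mul_assoc, ← Finset.mul_sum, ← Finset.sum_mul]
    rw [neg_one_geom_sum, if_neg (Nat.not_even_iff_odd.mpr hk), one_mul]
  simp_rw [sum_range_mul_eq_sum_blocks _ m k, mul_sub, Finset.sum_sub_distrib, blocks_const]

lemma norm_neg_one_pow_mul {R : Type*} [SeminormedRing R] (n : ℕ) (x : R) :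
    ‖(-1) ^ n * x‖ = ‖x‖ := by
  rcases neg_one_pow_eq_or R n with h | h <;> simp [h]

lemma norm_alternating_sum_range_mul_sub_le {R : Type*} [SeminormedRing R] [IsUltrametricDist R]
    {m k : ℕ} (hm : Odd m) (hk : Odd k) {a : ℕ → R} {C : ℝ}
    (ha : ∀ j x, ‖a (m * j + x) - a x‖ ≤ C) :
    ‖∑ x ∈ Finset.range (m * k), (-1) ^ x * a x - ∑ x ∈ Finset.range m, (-1) ^ x * a x‖ ≤ C := by
  have hC : 0 ≤ C := (norm_nonneg _).trans (ha 0 0)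
  rw [alternating_sum_range_mul_sub hm hk]
  refine IsUltrametricDist.norm_sum_le_of_forall_le_of_nonneg hC fun j _ =>
    IsUltrametricDist.norm_sum_le_of_forall_le_of_nonneg hC fun x _ => ?_
  rw [norm_neg_one_pow_mul]
  exact ha j x

end AlternatingSums

section FermionicIntegral

variable {p : ℕ} [Fact p.Prime]

/-- `HasFermionicIntegral f I` says that `I` is the fermionic `p`-adic integral of `f`, the limit
of the alternating sums `∑_{x < p ^ N} (-1) ^ x f x`. -/
def HasFermionicIntegral {R : Type*} [Ring R] [TopologicalSpace R] (f : ℤ_[p] → R) (I : R) : Prop :=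
  Tendsto (fun N : ℕ => ∑ x ∈ Finset.range (p ^ N), (-1) ^ x * f x) atTop (nhds I)

lemma tendsto_natCast_prime_pow_padicInt :
    Tendsto (fun N : ℕ => ((p ^ N : ℕ) : ℤ_[p])) atTop (nhds 0) := by
  push_cast
  exact tendsto_pow_atTop_nhds_zero_of_norm_lt_one
    (PadicInt.norm_lt_one_iff_dvd _ |>.mpr dvd_rfl)

theorem exists_hasFermionicIntegral {R : Type*} [NormedRing R] [IsUltrametricDist R]
    [CompleteSpace R] (hp : Odd p) {f : ℤ_[p] → R} (hf : Continuous f) :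
    ∃ I, HasFermionicIntegral f I := by
  refine cauchySeq_tendsto_of_complete
    (NonarchimedeanAddGroup.cauchySeq_of_tendsto_sub_nhds_zero ?_)
  rw [NormedAddGroup.tendsto_nhds_zero]
  intro ε hε
  obtain ⟨δ, hδ, hfδ⟩ := Metric.uniformContinuous_iff.mp
    (CompactSpace.uniformContinuous_of_continuous hf) (ε / 2) (half_pos hε)
  filter_upwards [NormedAddGroup.tendsto_nhds_zero.mp
    (tendsto_natCast_prime_pow_padicInt (p := p)) δ hδ] with N hN
  have oscillation_le (j x : ℕ) : ‖f (p ^ N * j + x : ℕ) - f x‖ ≤ ε / 2 := by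
    rw [← dist_eq_norm]
    refine (hfδ ?_).le
    calc dist ((p ^ N * j + x : ℕ) : ℤ_[p]) x = ‖((p ^ N : ℕ) : ℤ_[p])‖ * ‖(j : ℤ_[p])‖ := by
          rw [dist_eq_norm, Nat.cast_add, add_sub_cancel_right, Nat.cast_mul, norm_mul]
      _ ≤ ‖((p ^ N : ℕ) : ℤ_[p])‖ := mul_le_of_le_one_right (norm_nonneg _) (PadicInt.norm_le_one _)
      _ < δ := hN
  rw [pow_succ]
  exact (norm_alternating_sum_range_mul_sub_le hp.pow hp oscillation_le).trans_lt (half_lt_self hε)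

namespace HasFermionicIntegral

variable {R : Type*} [Ring R] [TopologicalSpace R] [IsTopologicalRing R] {f : ℤ_[p] → R} {I : R}

lemma comp_add_one (hp : Odd p) (hf : ContinuousAt f 0) (h : HasFermionicIntegral f I) :
    HasFermionicIntegral (fun x => f (x + 1)) (2 * f 0 - I) := by
  have shifted_sum (N : ℕ) : f 0 + f (p ^ N : ℕ) - ∑ x ∈ Finset.range (p ^ N), (-1) ^ x * f x =
      ∑ x ∈ Finset.range (p ^ N), (-1) ^ x * f (x + 1) := by
    have peel_both_ends : -∑ x ∈ Finset.range (p ^ N), (-1) ^ x * f (x + 1) + f 0 =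
        ∑ x ∈ Finset.range (p ^ N), (-1) ^ x * f x + -f (p ^ N : ℕ) := by
      simpa [pow_succ, hp.pow.neg_one_pow] using
        (Finset.sum_range_succ' (fun x : ℕ => (-1) ^ x * f x) (p ^ N)).symm.trans
          (Finset.sum_range_succ _ _)
    rw [neg_add_eq_iff_eq_add] at peel_both_ends
    rw [peel_both_ends]
    abel
  have boundary : Tendsto (fun N : ℕ => f (p ^ N : ℕ)) atTop (nhds (f 0)) :=
    hf.tendsto.comp tendsto_natCast_prime_pow_padicInt
  rw [two_mul]
  exact ((boundary.const_add _).sub h).congr shifted_sum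

theorem comp_add_natCast (hp : Odd p) (hf : Continuous f) (h : HasFermionicIntegral f I) (n : ℕ) :
    HasFermionicIntegral (fun x : ℤ_[p] => f (x + n))
      ((-1) ^ n * (I - 2 * ∑ l ∈ Finset.range n, (-1) ^ l * f l)) := by
  induction n with
  | zero => simpa using h
  | succ n ih =>
    have hn : Continuous fun x : ℤ_[p] => f (x + n) := by fun_prop
    convert ih.comp_add_one hp hn.continuousAt using 1
    · ext x
      rw [Nat.cast_succ, add_right_comm, add_assoc]
    · rw [Finset.sum_range_succ, zero_add]
      rcases neg_one_pow_eq_or R n with sign | sign <;> rw [pow_succ, sign] <;> noncomm_ring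

end HasFermionicIntegral

end FermionicIntegral

section PadicPowers

variable {p : ℕ} [Fact p.Prime]

instance : IsBoundedSMul ℤ_[p] ℚ_[p] :=
  .of_norm_smul_le fun a b => norm_mul_le (a : ℚ_[p]) b

lemma two_ne_zero_of_algebra_padicInt (K : Type*) [Field K] [Algebra ℤ_[p] K] (hp : Odd p) :
    (2 : K) ≠ 0 := by
  have isUnit_two : IsUnit ((2 : ℕ) : ℤ_[p]) := by
    rw [PadicInt.isUnit_iff, PadicInt.norm_natCast_eq_one_iff]
    exact Nat.coprime_two_right.mpr hp
  have map_two_ne_zero := (isUnit_two.map (algebraMap ℤ_[p] K)).ne_zero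
  rwa [map_natCast, Nat.cast_ofNat] at map_two_ne_zero

variable {R : Type*} [NormedRing R] [Algebra ℤ_[p] R] [IsBoundedSMul ℤ_[p] R]
  [IsUltrametricDist R] [CompleteSpace R] {q : R}

lemma exists_continuous_addChar_natCast_eq_pow (hq : ‖q - 1‖ < 1) :
    ∃ κ : AddChar ℤ_[p] R, Continuous κ ∧ ∀ n : ℕ, κ n = q ^ n := by
  have hnil := tendsto_pow_atTop_nhds_zero_of_norm_lt_one hq
  refine ⟨PadicInt.addChar_of_value_at_one (q - 1) hnil,
    PadicInt.continuous_addChar_of_value_at_one hnil, fun n => ?_⟩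
  rw [← nsmul_one, AddChar.map_nsmul_eq_pow, PadicInt.addChar_of_value_at_one_def,
    add_sub_cancel]

lemma tendsto_pow_prime_pow_nhds_one (hq : ‖q - 1‖ < 1) :
    Tendsto (fun N : ℕ => q ^ (p ^ N)) atTop (nhds 1) := by
  obtain ⟨κ, hκ, κ_natCast⟩ := exists_continuous_addChar_natCast_eq_pow (p := p) hq
  rw [← κ.map_zero_eq_one]
  exact ((hκ.tendsto 0).comp tendsto_natCast_prime_pow_padicInt).congr fun N => κ_natCast (p ^ N)

end PadicPowers

section QIntegral

variable {p : ℕ} [Fact p.Prime]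

/-- `HasFermionicQIntegral q f I` says that `I` is the fermionic `p`-adic `q`-integral
`I_{-q}(f) = lim_N 1 / [p ^ N]_{-q} ∑_{x < p ^ N} f x (-q) ^ x`, with
`[M]_{-q} = (1 - (-q) ^ M) / (1 + q)`. -/
def HasFermionicQIntegral {K : Type*} [Field K] [TopologicalSpace K]
    (q : K) (f : ℤ_[p] → K) (I : K) : Prop :=
  Tendsto (fun N : ℕ =>
      (1 / ((1 - (-q) ^ (p ^ N)) / (1 + q))) * ∑ x ∈ Finset.range (p ^ N), f x * (-q) ^ x)
    atTop (nhds I)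

variable {K : Type*} [NormedField K] [Algebra ℤ_[p] K] [IsBoundedSMul ℤ_[p] K]
  [IsUltrametricDist K] [CompleteSpace K] {q : K}

lemma tendsto_one_div_neg_qNumber_prime_pow (hp : Odd p) (hq : ‖q - 1‖ < 1) :
    Tendsto (fun N : ℕ => 1 / ((1 - (-q) ^ (p ^ N)) / (1 + q))) atTop (nhds ((1 + q) / 2)) := by
  simp_rw [hp.pow.neg_pow, sub_neg_eq_add, one_div_div]
  rw [← one_add_one_eq_two]
  refine tendsto_const_nhds.div ((tendsto_pow_prime_pow_nhds_one hq).const_add 1) ?_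
  rw [one_add_one_eq_two]
  exact two_ne_zero_of_algebra_padicInt K hp

lemma HasFermionicIntegral.hasFermionicQIntegral (hp : Odd p) (hq : ‖q - 1‖ < 1)
    {κ : AddChar ℤ_[p] K} (κ_natCast : ∀ n : ℕ, κ n = q ^ n) {f : ℤ_[p] → K} {I : K}
    (h : HasFermionicIntegral (fun x => κ x * f x) I) :
    HasFermionicQIntegral q f ((1 + q) / 2 * I) := by
  refine (tendsto_one_div_neg_qNumber_prime_pow hp hq).mul (h.congr fun N => ?_)
  refine Finset.sum_congr rfl fun x _ => ?_
  simp only [κ_natCast, neg_pow q]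
  ring

theorem stmt_13_general (hp : Odd p) (hq : ‖q - 1‖ < 1) {f : ℤ_[p] → K} (hf : Continuous f)
    (n : ℕ) :
    ∃ A B : K,
      HasFermionicQIntegral q (fun x : ℤ_[p] => f (x + n)) A ∧
      HasFermionicQIntegral q f B ∧
      q ^ n * A - (-1) ^ n * B =
        -(-1) ^ n * ((1 + q) * ∑ l ∈ Finset.range n, (-1) ^ l * q ^ l * f l) := by
  obtain ⟨κ, hκ, κ_natCast⟩ := exists_continuous_addChar_natCast_eq_pow (p := p) hq
  have hκf : Continuous fun x => κ x * f x := hκ.mul hf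
  obtain ⟨I, hI⟩ := exists_hasFermionicIntegral hp hκf
  obtain ⟨J, hJ⟩ := exists_hasFermionicIntegral hp
    (f := fun x : ℤ_[p] => κ x * f (x + n)) (by fun_prop)
  have shifted : HasFermionicIntegral (fun x : ℤ_[p] => κ (x + n) * f (x + n)) (q ^ n * J) := by
    refine (hJ.const_mul (q ^ n)).congr fun N => ?_
    simp only [Finset.mul_sum, κ.map_add_eq_mul, κ_natCast]
    exact Finset.sum_congr rfl fun x _ => by ring
  have shift_eq := tendsto_nhds_unique shifted (hI.comp_add_natCast hp hκf n)
  simp only [κ_natCast, ← mul_assoc] at shift_eq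
  refine ⟨_, _, hJ.hasFermionicQIntegral hp hq κ_natCast,
    hI.hasFermionicQIntegral hp hq κ_natCast, ?_⟩
  have two_ne_zero : (2 : K) ≠ 0 := two_ne_zero_of_algebra_padicInt K hp
  field_simp
  linear_combination (1 + q) * shift_eq

lemma exists_continuous_natCast_eq_qNumber (hq : ‖q - 1‖ < 1) :
    ∃ f : ℤ_[p] → K, Continuous f ∧ ∀ n : ℕ, f n = (1 - q ^ n) / (1 - q) := by
  obtain ⟨κ, hκ, κ_natCast⟩ := exists_continuous_addChar_natCast_eq_pow (p := p) hq
  exact ⟨fun x => (1 - κ x) / (1 - q), by fun_prop, fun n => by simp only [κ_natCast]⟩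

end QIntegral

/-- Let `p` be an odd prime, `q ∈ ℚ_p` with `|q-1|_p < 1`, `q ≠ 1`, `m : ℕ`,
and `n` an odd positive integer. Then both `p`-adic `q`-integral limits exist, and
`q^n · I_{-q}([x+n]_q^m) + I_{-q}([x]_q^m) = (1+q) · Σ_{l=0}^{n-1} (-1)^l q^l [l]_q^m`. -/
theorem stmt_13 (p : ℕ) [Fact p.Prime] (hodd : Odd p)
    (q : ℚ_[p]) (hq1 : ‖q - 1‖ < 1) (hq : q ≠ 1)
    (m n : ℕ) (hn : 0 < n) (hnodd : Odd n) :
    ∃ A B : ℚ_[p],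
      Tendsto (fun N : ℕ =>
          (1 / ((1 - (-q) ^ (p ^ N)) / (1 + q))) *
            ∑ x ∈ Finset.range (p ^ N), ((1 - q ^ (x + n)) / (1 - q)) ^ m * (-q) ^ x)
        atTop (nhds A) ∧
      Tendsto (fun N : ℕ =>
          (1 / ((1 - (-q) ^ (p ^ N)) / (1 + q))) *
            ∑ x ∈ Finset.range (p ^ N), ((1 - q ^ x) / (1 - q)) ^ m * (-q) ^ x)
        atTop (nhds B) ∧
      q ^ n * A + B =
        (1 + q) * ∑ l ∈ Finset.range n, (-1 : ℚ_[p]) ^ l * q ^ l * ((1 - q ^ l) / (1 - q)) ^ m := by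
  obtain ⟨qNumber, hcont, hqNumber⟩ := exists_continuous_natCast_eq_qNumber (p := p) hq1
  simpa only [HasFermionicQIntegral, Pi.pow_apply, ← Nat.cast_add, hqNumber, hnodd.neg_one_pow,
    neg_neg, neg_one_mul, one_mul, sub_neg_eq_add] using stmt_13_general hodd hq1 (hcont.pow m) n
end

section
/- Let p be an odd prime, let q ∈ ℚ_p satisfy |q - 1|_p < 1 with q ≠ 1, and define E_{n,q}(x) = (1+q) · (1/(1-q))^n · Σ_{l=0}^n C(n,l) (-1)^l q^{l·x} / (1 + q^{l+1}) for nonnegative integers n and x, and E_{n,q} = E_{n,q}(0). Then for every nonnegative integer m and every odd positive integer n: (1+q) · Σ_{l=0}^{n-1} (-1)^l q^l [l]_q^m = q^n E_{m,q}(n) + E_{m,q}. -/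
/-!
The `q`-Euler polynomials satisfy the difference equation
`q * E m (x + 1) + E m x = (1 + q) * [x]_q ^ m`: on the left the `l`-th summand is multiplied by
`1 + q ^ (l + 1)`, which cancels its denominator, and the binomial theorem sums what remains to
`(1 - q ^ x) ^ m`. Multiplying by `(-1) ^ x * q ^ x` and summing over `x < n` telescopes.

In `ℚ_p` the denominators are nonzero because `q ^ k` is congruent to `1` modulo the maximal ideal,
whereas `-1` is not, as `|2|_p = 1` when `p` is odd.
-/

open Finset

section UltrametricRing

variable {R : Type*} [SeminormedRing R] [NormOneClass R] [IsUltrametricDist R] {q : R}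

lemma norm_pow_sub_one_lt_one (hq : ‖q - 1‖ < 1) (k : ℕ) : ‖q ^ k - 1‖ < 1 := by
  have hq_le : ‖q‖ ≤ 1 := by
    simpa [hq.le] using IsUltrametricDist.norm_add_one_le_max_norm_one (q - 1)
  have hsum_le : ‖∑ i ∈ range k, q ^ i‖ ≤ 1 :=
    IsUltrametricDist.norm_sum_le_of_forall_le_of_nonneg zero_le_one fun i _ =>
      (norm_pow_le q i).trans (pow_le_one₀ (norm_nonneg q) hq_le)
  calc ‖q ^ k - 1‖ = ‖(∑ i ∈ range k, q ^ i) * (q - 1)‖ := by rw [geom_sum_mul]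
    _ ≤ ‖∑ i ∈ range k, q ^ i‖ * ‖q - 1‖ := norm_mul_le _ _
    _ ≤ ‖q - 1‖ := mul_le_of_le_one_left (norm_nonneg _) hsum_le
    _ < 1 := hq

lemma one_add_pow_ne_zero_of_norm_sub_one_lt_one (h2 : 1 ≤ ‖(2 : R)‖) (hq : ‖q - 1‖ < 1) (k : ℕ) :
    1 + q ^ k ≠ 0 := by
  intro h
  have hpow : q ^ k - 1 = -2 := by
    rw [eq_neg_of_add_eq_zero_right h]
    norm_num
  have hlt := norm_pow_sub_one_lt_one hq k
  rw [hpow, norm_neg] at hlt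
  exact hlt.not_ge h2

end UltrametricRing

lemma padic_norm_two_eq_one_of_odd {p : ℕ} [Fact p.Prime] (hodd : Odd p) : ‖(2 : ℚ_[p])‖ = 1 := by
  exact_mod_cast Padic.norm_natCast_eq_one_iff.2 hodd.coprime_two_right

lemma sum_range_alternating_telescope {R : Type*} [CommRing R] (q : R) (f : ℕ → R) (n : ℕ) :
    ∑ l ∈ range n, (-1) ^ l * q ^ l * (q * f (l + 1) + f l) = f 0 - (-1) ^ n * q ^ n * f n := by
  calc ∑ l ∈ range n, (-1) ^ l * q ^ l * (q * f (l + 1) + f l)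
      = ∑ l ∈ range n, ((-1) ^ l * q ^ l * f l - (-1) ^ (l + 1) * q ^ (l + 1) * f (l + 1)) :=
        sum_congr rfl fun l _ => by ring
    _ = f 0 - (-1) ^ n * q ^ n * f n := by
        simpa using sum_range_sub' (fun l => (-1) ^ l * q ^ l * f l) n

section Field

variable {K : Type*} [Field K] {q : K} {m : ℕ}

lemma one_sub_pow_div_one_sub (hq : q ≠ 1) (k : ℕ) :
    (1 - q ^ k) / (1 - q) = ∑ i ∈ range k, q ^ i :=
  (eq_div_of_mul_eq (sub_ne_zero.2 hq.symm) (geom_sum_mul_neg q k)).symm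

/-- The value at `x` of the `m`-th `q`-Euler polynomial `E_{m,q}`, restricted to natural numbers `x`
so that `q ^ (l * x)` is an ordinary power. At `q = 1`, or if some `1 + q ^ (l + 1)` vanishes,
division by zero makes the value meaningless. -/
def qEuler (q : K) (m x : ℕ) : K :=
  (1 + q) * (1 / (1 - q)) ^ m *
    ∑ l ∈ range (m + 1), (m.choose l : K) * (-1) ^ l * q ^ (l * x) / (1 + q ^ (l + 1))

lemma mul_qEuler_succ_add_qEuler (hq : q ≠ 1) (hden : ∀ l ≤ m, 1 + q ^ (l + 1) ≠ 0) (x : ℕ) :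
    q * qEuler q m (x + 1) + qEuler q m x = (1 + q) * (∑ i ∈ range x, q ^ i) ^ m := by
  have hterm : ∀ l ∈ range (m + 1),
      q * ((m.choose l : K) * (-1) ^ l * q ^ (l * (x + 1)) / (1 + q ^ (l + 1))) +
        (m.choose l : K) * (-1) ^ l * q ^ (l * x) / (1 + q ^ (l + 1)) =
      (-q ^ x) ^ l * 1 ^ (m - l) * (m.choose l : K) := by
    intro l hl
    have hne := hden l (mem_range_succ_iff.1 hl)
    rw [neg_pow, one_pow]
    field_simp
    ring
  calc q * qEuler q m (x + 1) + qEuler q m x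
      = (1 + q) * (1 / (1 - q)) ^ m *
          ∑ l ∈ range (m + 1), (-q ^ x) ^ l * 1 ^ (m - l) * (m.choose l : K) := by
        rw [qEuler, qEuler, mul_left_comm, ← mul_add, mul_sum, ← sum_add_distrib,
          sum_congr rfl hterm]
    _ = (1 + q) * (1 / (1 - q)) ^ m * (1 - q ^ x) ^ m := by rw [← add_pow, neg_add_eq_sub]
    _ = (1 + q) * ((1 - q ^ x) / (1 - q)) ^ m := by
        rw [mul_assoc, ← mul_pow, one_div_mul_eq_div]
    _ = (1 + q) * (∑ i ∈ range x, q ^ i) ^ m := by rw [one_sub_pow_div_one_sub hq]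

theorem stmt_15_general (hq : q ≠ 1) (hden : ∀ l ≤ m, 1 + q ^ (l + 1) ≠ 0) (n : ℕ) :
    (1 + q) * ∑ l ∈ range n, (-1) ^ l * q ^ l * (∑ i ∈ range l, q ^ i) ^ m =
      qEuler q m 0 - (-1) ^ n * q ^ n * qEuler q m n := by
  rw [← sum_range_alternating_telescope, mul_sum]
  refine sum_congr rfl fun l _ => ?_
  rw [mul_qEuler_succ_add_qEuler hq hden]
  ring

end Field

/-- Let `p` be an odd prime, `q ∈ ℚ_p` with `|q-1|_p < 1`, `q ≠ 1`, and define
`E_{n,q}(x) = (1+q) · (1/(1-q))^n · Σ_{l=0}^n C(n,l)(-1)^l q^{l·x}/(1+q^{l+1})` and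
`E_{n,q} = E_{n,q}(0)`. Then for every `m : ℕ` and every odd positive integer `n`:
`(1+q) · Σ_{l=0}^{n-1} (-1)^l q^l [l]_q^m = q^n E_{m,q}(n) + E_{m,q}`. -/
theorem stmt_15 (p : ℕ) [Fact p.Prime] (hodd : Odd p)
    (q : ℚ_[p]) (hq1 : ‖q - 1‖ < 1) (hq : q ≠ 1)
    (E : ℕ → ℕ → ℚ_[p])
    (hE : ∀ k x : ℕ, E k x = (1 + q) * (1 / (1 - q)) ^ k *
      ∑ l ∈ Finset.range (k + 1), (k.choose l : ℚ_[p]) * (-1) ^ l * q ^ (l * x) / (1 + q ^ (l + 1)))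
    (m n : ℕ) (hn : 0 < n) (hnodd : Odd n) :
    (1 + q) * ∑ l ∈ Finset.range n, (-1 : ℚ_[p]) ^ l * q ^ l * ((1 - q ^ l) / (1 - q)) ^ m =
      q ^ n * E m n + E m 0 := by
  obtain rfl : E = qEuler q := funext₂ hE
  have hden (l : ℕ) (_ : l ≤ m) : 1 + q ^ (l + 1) ≠ 0 :=
    one_add_pow_ne_zero_of_norm_sub_one_lt_one (padic_norm_two_eq_one_of_odd hodd).ge hq1 _
  simp_rw [one_sub_pow_div_one_sub hq]
  rw [stmt_15_general hq hden n, hnodd.neg_one_pow]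
  ring
end
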